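/- arXiv:1509.01691 — 2 statements merged into one kernel-verified Lean document; each statement's English description precedes it below -/
import Mathlib

section
/- Let (X,d) be a complete metric space, let σ be a conical geodesic bicombing on X with the midpoint property, and let Σ be a countable subsemigroup of the semigroup of 1-Lipschitz self-maps of X such that every element of Σ is σ-equivariant and Σ admits a Følner sequence (Σ_k)_{k≥1}. If there is a point x₀ ∈ X and a compact subset K₀ ⊆ X such that the set A := {s(x₀) : s ∈ Σ} is bounded and limsup_{k→∞} ( sup_{s∈Σ} (1/|Σ_k|) Σ_{h∈Σ_k} 1_{K₀}(h(s(x₀))) ) > 0, then there exists a point x⋆ ∈ cl conv_σ(A) such that s(x⋆) = x⋆ for every s ∈ Σ. -/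
open Set

/-- A conical geodesic bicombing on a metric space. -/
def IsConicalBicombing {X : Type*} [MetricSpace X] (σ : X → X → ℝ → X) : Prop :=
  (∀ x y : X, σ x y 0 = x) ∧ (∀ x y : X, σ x y 1 = y) ∧
  (∀ x y : X, ∀ s ∈ Icc (0:ℝ) 1, ∀ t ∈ Icc (0:ℝ) 1,
    dist (σ x y s) (σ x y t) = |s - t| * dist x y) ∧
  (∀ x x' y y' : X, ∀ t ∈ Icc (0:ℝ) 1,
    dist (σ x y t) (σ x' y' t) ≤ (1 - t) * dist x x' + t * dist y y')

/-- The midpoint property of a bicombing. -/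
def MidpointProp {X : Type*} [MetricSpace X] (σ : X → X → ℝ → X) : Prop :=
  ∀ x y : X, σ x y (1/2) = σ y x (1/2)

/-- A self-map is `σ`-equivariant. -/
def SigmaEquivariant {X : Type*} [MetricSpace X] (σ : X → X → ℝ → X) (φ : X → X) : Prop :=
  ∀ x y : X, ∀ t ∈ Icc (0:ℝ) 1, φ (σ x y t) = σ (φ x) (φ y) t

/-- The sets `A_k` in the inductive construction of the `σ`-convex hull. -/
def convSigmaSets {X : Type*} [MetricSpace X] (σ : X → X → ℝ → X) (A : Set X) : ℕ → Set X
  | 0 => A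
  | k + 1 => {z | ∃ x ∈ convSigmaSets σ A k, ∃ y ∈ convSigmaSets σ A k,
      ∃ t ∈ Icc (0:ℝ) 1, z = σ x y t}

/-- The `σ`-convex hull of a set. -/
def convSigma {X : Type*} [MetricSpace X] (σ : X → X → ℝ → X) (A : Set X) : Set X :=
  ⋃ k : ℕ, convSigmaSets σ A k

/-!
Positive visit density and compactness of `K₀` give a point `p` such that every ball around `p`
receives a fixed positive proportion of visits from the orbit of `x₀`. Følner invariance transports
this mass to the ball around `s • p` for every `s`, and disjoint balls have total mass at most `1`,
so the orbit of `p` is totally bounded.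

Følner invariance also yields, for all `s` and `t`, elements with `s * a = t * b`. By total
boundedness finitely many right multipliers suffice to do this up to `ε`, uniformly on the convex
hull of the orbit of `p`. Averaging over these multipliers contracts the diameter of orbits by a
definite factor, down to `ε`; iterating with `ε → 0` produces a Cauchy sequence of points whose
orbit diameters tend to `0`, and its limit is a fixed point.
-/

open Filter Topology
open scoped Finset symmDiff

section TotallyBounded

lemma totallyBounded_univ_pi {ι : Type*} {α : ι → Type*} [∀ i, UniformSpace (α i)]
    {s : ∀ i, Set (α i)} (hs : ∀ i, TotallyBounded (s i)) : TotallyBounded (univ.pi s) := by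
  rw [totallyBounded_iff_ultrafilter]
  intro f hf
  refine (cauchy_pi_iff' _).2 fun i ↦
    totallyBounded_iff_ultrafilter.1 (hs i) (f.map (Function.eval i)) ?_
  exact tendsto_principal.2 (mem_of_superset (le_principal_iff.1 hf) fun x hx ↦ hx i (mem_univ i))

lemma totallyBounded_of_forall_seq_exists_dist_lt {α : Type*} [PseudoMetricSpace α] {A : Set α}
    (h : ∀ ε > 0, ∀ u : ℕ → α, (∀ n, u n ∈ A) → ∃ m n, m ≠ n ∧ dist (u m) (u n) < ε) :
    TotallyBounded A := by
  rw [Metric.totallyBounded_iff]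
  intro ε hε
  by_contra! hcover
  have : Std.Symm fun x y : α ↦ ε ≤ dist x y := ⟨fun x y hxy ↦ by rwa [dist_comm]⟩
  obtain ⟨u, huA, hu⟩ := exists_seq_of_forall_finset_exists' (· ∈ A) (fun x y ↦ ε ≤ dist x y)
    fun t _ ↦ by
      obtain ⟨y, hyA, hy⟩ := not_subset.1 (hcover t t.finite_toSet)
      refine ⟨y, hyA, fun x hx ↦ not_lt.1 fun hlt ↦ hy (mem_biUnion hx ?_)⟩
      rwa [Metric.mem_ball, dist_comm]
  obtain ⟨m, n, hmn, hlt⟩ := h ε hε u huA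
  exact hlt.not_ge (hu hmn)

lemma exists_finset_forall_dist_lt_of_uniformEquicontinuous {ι α β : Type*}
    [PseudoMetricSpace α] [PseudoMetricSpace β] {Φ : ι → α → β} {S : Set ι} {A : Set α} {B : Set β}
    (hΦ : UniformEquicontinuous fun s : S ↦ Φ s) (hA : TotallyBounded A) (hB : TotallyBounded B)
    (hmaps : ∀ s ∈ S, MapsTo (Φ s) A B) {ε : ℝ} (hε : 0 < ε) :
    ∃ T : Finset ι, ↑T ⊆ S ∧ ∀ s ∈ S, ∃ t ∈ T, ∀ x ∈ A, dist (Φ s x) (Φ t x) < ε := by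
  classical
  obtain ⟨δ, hδ, hequi⟩ := Metric.uniformEquicontinuous_iff.1 hΦ (ε / 3) (by positivity)
  obtain ⟨N, hNA, hNfin, hAN⟩ := Metric.finite_approx_of_totallyBounded hA δ hδ
  have := hNfin.fintype
  let restrict : ι → N → β := fun s x ↦ Φ s x
  have hrestrict : TotallyBounded (restrict '' S) :=
    (totallyBounded_univ_pi fun _ ↦ hB).subset <| by
      rintro _ ⟨s, hs, rfl⟩ x -
      exact hmaps s hs (hNA x.2)
  obtain ⟨R, hRS, hRfin, hSR⟩ :=
    Metric.finite_approx_of_totallyBounded hrestrict (ε / 3) (by positivity)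
  lift R to Finset (N → β) using hRfin
  obtain ⟨T, hTS, rfl⟩ := Finset.subset_set_image_iff.1 hRS
  refine ⟨T, hTS, fun s hs ↦ ?_⟩
  obtain ⟨t, ht, hst⟩ : ∃ t ∈ T, dist (restrict s) (restrict t) < ε / 3 := by
    simpa using hSR (mem_image_of_mem restrict hs)
  refine ⟨t, ht, fun x hx ↦ ?_⟩
  obtain ⟨y, hyN, hxy⟩ : ∃ y ∈ N, dist x y < δ := by simpa using hAN hx
  have hs_near : dist (Φ s x) (Φ s y) < ε / 3 := hequi x y hxy ⟨s, hs⟩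
  have ht_near : dist (Φ t y) (Φ t x) < ε / 3 := hequi y x (by rwa [dist_comm]) ⟨t, hTS ht⟩
  have hy_near : dist (Φ s y) (Φ t y) < ε / 3 :=
    (dist_le_pi_dist (restrict s) (restrict t) ⟨y, hyN⟩).trans_lt hst
  linarith [dist_triangle4 (Φ s x) (Φ s y) (Φ t y) (Φ t x)]

end TotallyBounded

section SigmaConvex

variable {X : Type*} {σ : X → X → ℝ → X} {A W : Set X}

/-- A set that is convex with respect to `σ`: it contains the path `σ x y` between any two of its
points. -/
def IsSigmaConvex (σ : X → X → ℝ → X) (W : Set X) : Prop :=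
  ∀ x ∈ W, ∀ y ∈ W, ∀ t ∈ Icc (0 : ℝ) 1, σ x y t ∈ W

/-- A real function that is convex along the paths of `σ`; distances between equivariant maps are
the examples that matter here. -/
def IsSigmaConvexFun (σ : X → X → ℝ → X) (f : X → ℝ) : Prop :=
  ∀ x y : X, ∀ t ∈ Icc (0 : ℝ) 1, f (σ x y t) ≤ (1 - t) * f x + t * f y

lemma IsSigmaConvexFun.isSigmaConvex_setOf_le {f : X → ℝ} (hf : IsSigmaConvexFun σ f) (c : ℝ) :
    IsSigmaConvex σ {x | f x ≤ c} := by
  intro x (hx : f x ≤ c) y (hy : f y ≤ c) t ht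
  calc f (σ x y t) ≤ (1 - t) * f x + t * f y := hf x y t ht
    _ ≤ (1 - t) * c + t * c := by
      gcongr
      · exact sub_nonneg.2 ht.2
      · exact ht.1
    _ = c := by ring

variable [MetricSpace X]

lemma subset_convSigma (σ : X → X → ℝ → X) (A : Set X) : A ⊆ convSigma σ A :=
  subset_iUnion (convSigmaSets σ A) 0

lemma convSigma_subset (hAW : A ⊆ W) (hW : IsSigmaConvex σ W) : convSigma σ A ⊆ W := by
  refine iUnion_subset fun k ↦ ?_
  induction k with
  | zero => exact hAW
  | succ k ih =>
    rintro _ ⟨x, hx, y, hy, t, ht, rfl⟩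
    exact hW x (ih hx) y (ih hy) t ht

lemma SigmaEquivariant.mapsTo_convSigma {φ : X → X} (hφ : SigmaEquivariant σ φ)
    (hW : IsSigmaConvex σ W) (hmaps : MapsTo φ A W) : MapsTo φ (convSigma σ A) W :=
  convSigma_subset (W := φ ⁻¹' W) hmaps fun x hx y hy t ht ↦ by
    rw [mem_preimage, hφ x y t ht]
    exact hW _ hx _ hy t ht

namespace IsConicalBicombing

lemma isSigmaConvex_convSigma (hσ : IsConicalBicombing σ) (A : Set X) :
    IsSigmaConvex σ (convSigma σ A) := by
  have hmono : Monotone (convSigmaSets σ A) := monotone_nat_of_le_succ fun k x hx ↦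
    ⟨x, hx, x, hx, 0, by simp, (hσ.1 x x).symm⟩
  intro x hx y hy t ht
  obtain ⟨i, hi⟩ := mem_iUnion.1 hx
  obtain ⟨j, hj⟩ := mem_iUnion.1 hy
  exact mem_iUnion.2 ⟨max i j + 1, x, hmono (le_max_left i j) hi, y,
    hmono (le_max_right i j) hj, t, ht, rfl⟩

lemma isSigmaConvex_closure (hσ : IsConicalBicombing σ) (hW : IsSigmaConvex σ W) :
    IsSigmaConvex σ (closure W) := by
  intro x hx y hy t ht
  have hcont : Continuous fun z : X × X ↦ σ z.1 z.2 t := by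
    refine (LipschitzWith.of_dist_le_mul (K := 1) fun z w ↦ ?_).continuous
    have hfst : dist z.1 w.1 ≤ dist z w := le_max_left _ _
    have hsnd : dist z.2 w.2 ≤ dist z w := le_max_right _ _
    calc dist (σ z.1 z.2 t) (σ w.1 w.2 t)
        ≤ (1 - t) * dist z.1 w.1 + t * dist z.2 w.2 := hσ.2.2.2 _ _ _ _ t ht
      _ ≤ (1 - t) * dist z w + t * dist z w := by
        gcongr
        · exact sub_nonneg.2 ht.2
        · exact ht.1
      _ = (1 : NNReal) * dist z w := by push_cast; ring
  exact map_mem_closure₂ (f := fun x y ↦ σ x y t) hcont hx hy fun a ha b hb ↦ hW a ha b hb t ht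

lemma sigmaEquivariant_const (hσ : IsConicalBicombing σ) (z : X) :
    SigmaEquivariant σ fun _ ↦ z := by
  intro x y t ht
  have hconst : dist (σ z z 0) (σ z z t) = 0 := by
    rw [hσ.2.2.1 z z 0 (by simp) t ht, dist_self, mul_zero]
  rw [hσ.1] at hconst
  exact dist_eq_zero.1 hconst

lemma isSigmaConvexFun_dist (hσ : IsConicalBicombing σ) {φ ψ : X → X}
    (hφ : SigmaEquivariant σ φ) (hψ : SigmaEquivariant σ ψ) :
    IsSigmaConvexFun σ fun x ↦ dist (φ x) (ψ x) := by
  intro x y t ht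
  simp only [hφ x y t ht, hψ x y t ht]
  exact hσ.2.2.2 _ _ _ _ t ht

lemma isSigmaConvexFun_dist_const (hσ : IsConicalBicombing σ) (z : X) {φ : X → X}
    (hφ : SigmaEquivariant σ φ) : IsSigmaConvexFun σ fun x ↦ dist z (φ x) :=
  hσ.isSigmaConvexFun_dist (hσ.sigmaEquivariant_const z) hφ

-- Iterated midpoints: `x₁`, then `σ x₂ x₁ (1/2)`, and so on; each step halves the older weights.
lemma exists_mem_convSigma_forall_le_combo (hσ : IsConicalBicombing σ) {κ : Type*}
    {T : Finset κ} (hT : T.Nonempty) (x : κ → X) :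
    ∃ m ∈ convSigma σ (x '' T), ∀ f, IsSigmaConvexFun σ f → ∀ D, (∀ i ∈ T, f (x i) ≤ D) →
      ∀ i ∈ T, f m ≤ (1 - (1 / 2) ^ #T) * D + (1 / 2) ^ #T * f (x i) := by
  induction hT using Finset.Nonempty.cons_induction with
  | singleton a =>
    refine ⟨x a, subset_convSigma σ _ (by simp), fun f _ D hD i hi ↦ ?_⟩
    obtain rfl := Finset.mem_singleton.1 hi
    rw [Finset.card_singleton]
    linarith [hD i hi]
  | cons a T ha hT ih =>
    obtain ⟨m, hm, hfm⟩ := ih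
    have half_mem : (1 / 2 : ℝ) ∈ Icc (0 : ℝ) 1 := by constructor <;> norm_num
    have hmem : σ (x a) m (1 / 2) ∈ convSigma σ (x '' (T.cons a ha)) := by
      have hconvex := hσ.isSigmaConvex_convSigma (x '' (T.cons a ha))
      refine hconvex _ (subset_convSigma σ _ ⟨a, by simp, rfl⟩) _ ?_ _ half_mem
      refine convSigma_subset ((image_mono ?_).trans (subset_convSigma σ _)) hconvex hm
      exact_mod_cast Finset.subset_cons ha
    refine ⟨_, hmem, fun f hf D hD i hi ↦ ?_⟩
    have hDT : ∀ j ∈ T, f (x j) ≤ D := fun j hj ↦ hD j (Finset.mem_cons_of_mem hj)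
    have hmid := hf (x a) m _ half_mem
    have hweight : (0 : ℝ) ≤ (1 / 2) ^ #T := by positivity
    rw [Finset.card_cons, pow_succ]
    rcases Finset.mem_cons.1 hi with rfl | hiT
    · obtain ⟨j, hj⟩ := hT
      have hweight_le : (1 / 2 : ℝ) ^ #T ≤ 1 := pow_le_one₀ (by norm_num) (by norm_num)
      nlinarith [hfm f hf D hDT j hj, hDT j hj, hD i hi]
    · linarith [hfm f hf D hDT i hiT, hD a (Finset.mem_cons_self a T)]

end IsConicalBicombing

end SigmaConvex

section Coalescence

variable {G X : Type*}

lemma mapsTo_smul_image_smul [Semigroup G] [SemigroupAction G X] (S : Subsemigroup G) (p : X)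
    {s : G} (hs : s ∈ S) :
    MapsTo (s • ·) ((· • p) '' (S : Set G)) ((· • p) '' (S : Set G)) := by
  rintro _ ⟨t, ht, rfl⟩
  exact ⟨s * t, S.mul_mem hs ht, mul_smul s t p⟩

variable [MetricSpace X] {σ : X → X → ℝ → X}

/-- The `S`-orbit of `x` has diameter at most `D`. -/
def OrbitDiamLE [SMul G X] (S : Set G) (D : ℝ) (x : X) : Prop :=
  ∀ s ∈ S, ∀ t ∈ S, dist (s • x) (t • x) ≤ D

/-- Any `s` and `t` in `S` can be brought within `ε` of each other, uniformly on `Y`, by composing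
them on the right with elements of one finite set that depends only on `ε`. -/
def IsCoalescingOn [SMul G X] (S : Set G) (Y : Set X) : Prop :=
  ∀ ε > 0, ∃ T : Finset G, ↑T ⊆ S ∧
    ∀ s ∈ S, ∀ t ∈ S, ∃ i ∈ T, ∃ j ∈ T, ∀ x ∈ Y, dist (s • i • x) (t • j • x) ≤ ε

lemma SigmaEquivariant.smul_smul [SMul G X] {s t : G}
    (hs : SigmaEquivariant σ (s • · : X → X)) (ht : SigmaEquivariant σ (t • · : X → X)) :
    SigmaEquivariant σ (s • t • · : X → X) := fun x y r hr ↦ by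
  simp only [ht x y r hr, hs _ _ r hr]

lemma IsCoalescingOn.convSigma [SMul G X] {S : Set G} {A : Set X} (hσ : IsConicalBicombing σ)
    (hequiv : ∀ s ∈ S, SigmaEquivariant σ (s • · : X → X)) (hcoal : IsCoalescingOn S A) :
    IsCoalescingOn S (convSigma σ A) := by
  intro ε hε
  obtain ⟨T, hTS, hT⟩ := hcoal ε hε
  refine ⟨T, hTS, fun s hs t ht ↦ ?_⟩
  obtain ⟨i, hi, j, hj, hij⟩ := hT s hs t ht
  have hconvex : IsSigmaConvexFun σ fun x : X ↦ dist (s • i • x) (t • j • x) :=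
    hσ.isSigmaConvexFun_dist ((hequiv s hs).smul_smul (hequiv i (hTS hi)))
      ((hequiv t ht).smul_smul (hequiv j (hTS hj)))
  exact ⟨i, hi, j, hj, convSigma_subset hij (hconvex.isSigmaConvex_setOf_le ε)⟩

variable [Semigroup G] [SemigroupAction G X] {S : Subsemigroup G}

lemma isCoalescingOn_image_smul_of_totallyBounded
    (hlip : ∀ s ∈ S, LipschitzWith 1 (s • · : X → X))
    (hrev : ∀ s ∈ S, ∀ t ∈ S, ∃ a ∈ S, ∃ b ∈ S, s * a = t * b) {p : X}
    (htb : TotallyBounded ((· • p) '' (S : Set G))) :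
    IsCoalescingOn (S : Set G) ((· • p) '' (S : Set G)) := by
  intro ε hε
  obtain ⟨T, hTS, hT⟩ := exists_finset_forall_dist_lt_of_uniformEquicontinuous
    (Φ := fun (s : G) (x : X) ↦ s • x)
    (LipschitzWith.uniformEquicontinuous _ 1 fun s : (S : Set G) ↦ hlip s s.2) htb htb
    (fun s hs ↦ mapsTo_smul_image_smul S p hs) (half_pos hε)
  refine ⟨T, hTS, fun s hs t ht ↦ ?_⟩
  obtain ⟨a, ha, b, hb, hab⟩ := hrev s hs t ht
  obtain ⟨i, hi, hai⟩ := hT a ha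
  obtain ⟨j, hj, hbj⟩ := hT b hb
  refine ⟨i, hi, j, hj, fun x hx ↦ ?_⟩
  have hmeet : s • a • x = t • b • x := by rw [← mul_smul, hab, mul_smul]
  calc dist (s • i • x) (t • j • x)
      ≤ dist (s • a • x) (s • i • x) + dist (t • b • x) (t • j • x) := by
        rw [hmeet]; exact dist_triangle_left _ _ _
    _ ≤ dist (a • x) (i • x) + dist (b • x) (j • x) :=
        add_le_add ((hlip s hs).dist_le_mul_of_le le_rfl |>.trans_eq (one_mul _))
          ((hlip t ht).dist_le_mul_of_le le_rfl |>.trans_eq (one_mul _))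
    _ ≤ ε := by linarith [hai x hx, hbj x hx]

lemma IsConicalBicombing.dist_smul_le_of_mem_convSigma (hσ : IsConicalBicombing σ)
    (hequiv : ∀ s ∈ S, SigmaEquivariant σ (s • · : X → X)) {T : Set G} (hTS : T ⊆ S) {y m : X}
    (hm : m ∈ convSigma σ ((· • y) '' T)) {z : X} {u : ℝ} (hu : ∀ s ∈ S, dist z (s • y) ≤ u)
    {s : G} (hs : s ∈ S) : dist z (s • m) ≤ u := by
  have hconvex := hσ.isSigmaConvexFun_dist_const z (hequiv s hs)
  refine convSigma_subset (image_subset_iff.2 fun i hi ↦ ?_) (hconvex.isSigmaConvex_setOf_le u) hm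
  change dist z (s • i • y) ≤ u
  rw [← mul_smul]
  exact hu _ (S.mul_mem hs (hTS hi))

-- `m` is an average of the points `i • y`, `i ∈ T`. Averaging in each of the two arguments of
-- `dist (s • m) (t • m)` keeps it below `D`, and each time the weight `c` falls on the pair
-- `s • i • y`, `t • j • y` at distance at most `ε`.
lemma exists_orbitDiamLE_contraction (hσ : IsConicalBicombing σ)
    (hequiv : ∀ s ∈ S, SigmaEquivariant σ (s • · : X → X)) {Y : Set X} (hY : IsSigmaConvex σ Y)
    (hinv : ∀ s ∈ S, MapsTo (s • ·) Y Y) {T : Finset G} (hTS : ↑T ⊆ (S : Set G))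
    (hTne : T.Nonempty) {ε D : ℝ}
    (hT : ∀ s ∈ S, ∀ t ∈ S, ∃ i ∈ T, ∃ j ∈ T, ∀ x ∈ Y, dist (s • i • x) (t • j • x) ≤ ε)
    {y : X} (hy : y ∈ Y) (hD : OrbitDiamLE (S : Set G) D y) :
    ∃ m ∈ Y, (∀ z u, (∀ s ∈ S, dist z (s • y) ≤ u) → ∀ s ∈ S, dist z (s • m) ≤ u) ∧
      OrbitDiamLE (S : Set G) (D - ((1 / 2) ^ #T) ^ 2 * (D - ε)) m := by
  obtain ⟨m, hm, havg⟩ := hσ.exists_mem_convSigma_forall_le_combo hTne (· • y)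
  refine ⟨m, convSigma_subset (image_subset_iff.2 fun i hi ↦ hinv i (hTS hi) hy) hY hm,
    fun z u hu s hs ↦ hσ.dist_smul_le_of_mem_convSigma hequiv hTS hm hu hs, fun s hs t ht ↦ ?_⟩
  obtain ⟨i, hi, j, hj, hij⟩ := hT s hs t ht
  set c : ℝ := (1 / 2) ^ #T
  have hsmul_smul (r k : G) (x : X) : r • k • x = (r * k) • x := (mul_smul r k x).symm
  have hnear : dist (s • i • y) (t • m) ≤ (1 - c) * D + c * ε := by
    refine (havg _ (hσ.isSigmaConvexFun_dist_const _ (hequiv t ht)) D (fun k hk ↦ ?_) j hj).trans ?_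
    · rw [hsmul_smul s, hsmul_smul t]
      exact hD _ (S.mul_mem hs (hTS hi)) _ (S.mul_mem ht (hTS hk))
    · gcongr
      exact hij y hy
  have hbound : dist (t • m) (s • m) ≤ (1 - c) * D + c * dist (t • m) (s • i • y) := by
    refine havg _ (hσ.isSigmaConvexFun_dist_const _ (hequiv s hs)) D (fun k hk ↦ ?_) i hi
    rw [hsmul_smul s, dist_comm]
    exact hσ.dist_smul_le_of_mem_convSigma hequiv hTS hm (hD _ (S.mul_mem hs (hTS hk))) ht
  calc dist (s • m) (t • m) = dist (t • m) (s • m) := dist_comm _ _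
    _ ≤ (1 - c) * D + c * dist (s • i • y) (t • m) := by rwa [dist_comm (s • i • y)]
    _ ≤ (1 - c) * D + c * ((1 - c) * D + c * ε) := by gcongr
    _ = D - c ^ 2 * (D - ε) := by ring

lemma exists_orbitDiamLE_of_isCoalescingOn (hσ : IsConicalBicombing σ)
    (hequiv : ∀ s ∈ S, SigmaEquivariant σ (s • · : X → X)) (hSne : (S : Set G).Nonempty)
    {Y : Set X} (hY : IsSigmaConvex σ Y) (hinv : ∀ s ∈ S, MapsTo (s • ·) Y Y)
    (hcoal : IsCoalescingOn (S : Set G) Y) {x : X} (hx : x ∈ Y) {D : ℝ}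
    (hD : OrbitDiamLE (S : Set G) D x) {ε : ℝ} (hε : 0 < ε) :
    ∃ y ∈ Y, OrbitDiamLE (S : Set G) ε y ∧ ∀ s ∈ S, ∀ t ∈ S, dist (s • x) (t • y) ≤ D := by
  obtain ⟨T, hTS, hT⟩ := hcoal (ε / 2) (half_pos hε)
  have hTne : T.Nonempty := by
    obtain ⟨s, hs⟩ := hSne
    obtain ⟨i, hi, -⟩ := hT s hs s hs
    exact ⟨i, hi⟩
  set q : ℝ := 1 - ((1 / 2) ^ #T) ^ 2
  have hq : 0 ≤ q := sub_nonneg.2 <|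
    pow_le_one₀ (by positivity) (pow_le_one₀ (by norm_num) (by norm_num))
  have hq1 : q < 1 := sub_lt_self 1 (by positivity)
  have hiterate (n : ℕ) : ∃ y ∈ Y, (∀ s ∈ S, ∀ t ∈ S, dist (s • x) (t • y) ≤ D) ∧
      OrbitDiamLE (S : Set G) (ε / 2 + q ^ n * (D - ε / 2)) y := by
    induction n with
    | zero => exact ⟨x, hx, hD, by simpa using hD⟩
    | succ n ih =>
      obtain ⟨y, hy, hxy, hyD⟩ := ih
      obtain ⟨m, hm, hclose, hmD⟩ :=
        exists_orbitDiamLE_contraction hσ hequiv hY hinv hTS hTne hT hy hyD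
      refine ⟨m, hm, fun s hs ↦ hclose _ D (hxy s hs), ?_⟩
      convert hmD using 1
      ring
  have hlim : Tendsto (fun n ↦ q ^ n * (D - ε / 2)) atTop (𝓝 0) := by
    simpa using (tendsto_pow_atTop_nhds_zero_of_lt_one hq hq1).mul_const (D - ε / 2)
  obtain ⟨n, hn⟩ := (hlim.eventually_lt_const (half_pos hε)).exists
  obtain ⟨y, hy, hxy, hyD⟩ := hiterate n
  exact ⟨y, hy, fun s hs t ht ↦ (hyD s hs t ht).trans (by linarith), hxy⟩

lemma exists_seq_orbitDiamLE (hσ : IsConicalBicombing σ)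
    (hequiv : ∀ s ∈ S, SigmaEquivariant σ (s • · : X → X)) (hSne : (S : Set G).Nonempty)
    {Y : Set X} (hY : IsSigmaConvex σ Y) (hinv : ∀ s ∈ S, MapsTo (s • ·) Y Y)
    (hcoal : IsCoalescingOn (S : Set G) Y) {x : X} (hx : x ∈ Y) {D : ℝ} (hDpos : 0 < D)
    (hD : OrbitDiamLE (S : Set G) D x) :
    ∃ y : ℕ → X, ∀ n, y n ∈ Y ∧ OrbitDiamLE (S : Set G) (D * (1 / 2) ^ n) (y n) ∧
      ∀ s ∈ S, ∀ t ∈ S, dist (s • y n) (t • y (n + 1)) ≤ D * (1 / 2) ^ n := by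
  let P (n : ℕ) (y : X) : Prop := y ∈ Y ∧ OrbitDiamLE (S : Set G) (D * (1 / 2) ^ n) y
  have hstep (n : ℕ) (y : X) (hy : P n y) : ∃ y', P (n + 1) y' ∧
      ∀ s ∈ S, ∀ t ∈ S, dist (s • y) (t • y') ≤ D * (1 / 2) ^ n := by
    obtain ⟨y', hy', hdiam, hdist⟩ := exists_orbitDiamLE_of_isCoalescingOn hσ hequiv hSne hY hinv
      hcoal hy.1 hy.2 (ε := D * (1 / 2) ^ (n + 1)) (by positivity)
    exact ⟨y', ⟨hy', hdiam⟩, hdist⟩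
  choose! next hnextP hnext using hstep
  let y : ℕ → X := fun n ↦ Nat.rec x next n
  have hy (n : ℕ) : P n (y n) := by
    induction n with
    | zero => exact ⟨hx, by simpa [y] using hD⟩
    | succ n ih => exact hnextP n _ ih
  exact ⟨y, fun n ↦ ⟨(hy n).1, (hy n).2, hnext n _ (hy n)⟩⟩

theorem exists_fixed_point_of_isCoalescingOn [CompleteSpace X] (hσ : IsConicalBicombing σ)
    (hlip : ∀ s ∈ S, LipschitzWith 1 (s • · : X → X))
    (hequiv : ∀ s ∈ S, SigmaEquivariant σ (s • · : X → X)) (hSne : (S : Set G).Nonempty)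
    {Y : Set X} (hY : IsSigmaConvex σ Y) (hinv : ∀ s ∈ S, MapsTo (s • ·) Y Y)
    (hcoal : IsCoalescingOn (S : Set G) Y) {x : X} (hx : x ∈ Y)
    (hbdd : Bornology.IsBounded ((· • x) '' (S : Set G))) :
    ∃ z ∈ closure Y, ∀ s ∈ S, s • z = z := by
  obtain ⟨D, hDpos, hD⟩ : ∃ D > 0, OrbitDiamLE (S : Set G) D x := by
    obtain ⟨C, hC⟩ := Metric.isBounded_iff.1 hbdd
    exact ⟨max C 1, by positivity, fun s hs t ht ↦
      (hC (mem_image_of_mem _ hs) (mem_image_of_mem _ ht)).trans (le_max_left C 1)⟩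
  obtain ⟨y, hy⟩ := exists_seq_orbitDiamLE hσ hequiv hSne hY hinv hcoal hx hDpos hD
  obtain ⟨s₀, hs₀⟩ := hSne
  have hcauchy : CauchySeq fun n ↦ s₀ • y n :=
    cauchySeq_of_le_geometric (1 / 2) D (by norm_num) fun n ↦ (hy n).2.2 s₀ hs₀ s₀ hs₀
  obtain ⟨z, hz⟩ := cauchySeq_tendsto_of_complete hcauchy
  refine ⟨z, mem_closure_of_tendsto hz (.of_forall fun n ↦ hinv s₀ hs₀ (hy n).1), fun s hs ↦ ?_⟩
  have hdist : Tendsto (fun n ↦ dist (s • s₀ • y n) (s₀ • y n)) atTop (𝓝 (dist (s • z) z)) :=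
    (((hlip s hs).continuous.tendsto z).comp hz).dist hz
  have hgeom : Tendsto (fun n : ℕ ↦ D * (1 / 2) ^ n) atTop (𝓝 0) := by
    simpa using (tendsto_pow_atTop_nhds_zero_of_lt_one (r := (1 / 2 : ℝ))
      (by norm_num) (by norm_num)).const_mul D
  refine dist_le_zero.1 (le_of_tendsto_of_tendsto' hdist hgeom fun n ↦ ?_)
  rw [← mul_smul]
  exact (hy n).2.1 _ (S.mul_mem hs hs₀) _ hs₀

theorem exists_fixed_point_of_totallyBounded_orbit [CompleteSpace X] (hσ : IsConicalBicombing σ)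
    (hlip : ∀ s ∈ S, LipschitzWith 1 (s • · : X → X))
    (hequiv : ∀ s ∈ S, SigmaEquivariant σ (s • · : X → X)) (hSne : (S : Set G).Nonempty)
    (hrev : ∀ s ∈ S, ∀ t ∈ S, ∃ a ∈ S, ∃ b ∈ S, s * a = t * b) {p : X}
    (htb : TotallyBounded ((· • p) '' (S : Set G))) :
    ∃ z ∈ closure (convSigma σ ((· • p) '' (S : Set G))), ∀ s ∈ S, s • z = z := by
  have hconvex := hσ.isSigmaConvex_convSigma ((· • p) '' (S : Set G))
  have hinv (s : G) (hs : s ∈ S) :=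
    (hequiv s hs).mapsTo_convSigma hconvex
      ((mapsTo_smul_image_smul S p hs).mono_right (subset_convSigma σ _))
  have hcoal := (isCoalescingOn_image_smul_of_totallyBounded hlip hrev htb).convSigma hσ hequiv
  obtain ⟨s₀, hs₀⟩ := hSne
  have hbdd : Bornology.IsBounded ((· • s₀ • p) '' (S : Set G)) :=
    htb.isBounded.subset <| image_subset_iff.2 fun s hs ↦
      mapsTo_smul_image_smul S p hs (mem_image_of_mem _ hs₀)
  exact exists_fixed_point_of_isCoalescingOn hσ hlip hequiv ⟨s₀, hs₀⟩ hconvex hinv hcoal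
    (subset_convSigma σ _ (mem_image_of_mem _ hs₀)) hbdd

end Coalescence

section VisitFrequency

variable {G X : Type*} [SMul G X]

/-- The proportion of the `h ∈ F` with `h • y ∈ E`; it is `0` when `F` is empty. -/
noncomputable def visitFrequency (F : Finset G) (y : X) (E : Set X) : ℝ :=
  (∑ h ∈ F, E.indicator (fun _ ↦ (1 : ℝ)) (h • y)) / #F

lemma visitFrequency_nonneg (F : Finset G) (y : X) (E : Set X) : 0 ≤ visitFrequency F y E :=
  div_nonneg (Finset.sum_nonneg fun _ _ ↦ indicator_nonneg (fun _ _ ↦ zero_le_one) _)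
    (Nat.cast_nonneg _)

lemma visitFrequency_mono (F : Finset G) (y : X) {E E' : Set X} (h : E ⊆ E') :
    visitFrequency F y E ≤ visitFrequency F y E' := by
  unfold visitFrequency
  gcongr

lemma visitFrequency_union_le (F : Finset G) (y : X) (E E' : Set X) :
    visitFrequency F y (E ∪ E') ≤ visitFrequency F y E + visitFrequency F y E' := by
  unfold visitFrequency
  rw [← add_div, ← Finset.sum_add_distrib]
  gcongr with h
  rw [← indicator_union_add_inter_apply]
  exact le_add_of_nonneg_right (indicator_nonneg (fun _ _ ↦ zero_le_one) _)

lemma sum_visitFrequency_le_one (F : Finset G) (y : X) {κ : Type*} (I : Finset κ) {E : κ → Set X}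
    (hE : (I : Set κ).PairwiseDisjoint E) : ∑ i ∈ I, visitFrequency F y (E i) ≤ 1 := by
  unfold visitFrequency
  rw [← Finset.sum_div, Finset.sum_comm]
  refine div_le_one_of_le₀ ?_ (Nat.cast_nonneg _)
  calc ∑ h ∈ F, ∑ i ∈ I, (E i).indicator (fun _ ↦ (1 : ℝ)) (h • y)
      ≤ ∑ h ∈ F, 1 := by
        gcongr with h
        rw [← Finset.indicator_biUnion_apply I E hE]
        exact indicator_le_self' (fun _ _ ↦ zero_le_one) _
    _ = #F := by simp

lemma exists_smul_mem_of_visitFrequency_pos {F : Finset G} {y : X} {E : Set X}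
    (h : 0 < visitFrequency F y E) : ∃ g ∈ F, g • y ∈ E := by
  by_contra! hE
  refine h.ne' ?_
  rw [visitFrequency, Finset.sum_eq_zero fun g hg ↦ indicator_of_notMem (hE g hg) _, zero_div]

/-- Along the filter `l` of indices, the sets `F k` frequently send some point of `A` into `E` for
at least a fixed positive proportion of their elements. -/
def HasPosVisitDensity {ι : Type*} (l : Filter ι) (F : ι → Finset G) (A E : Set X) : Prop :=
  ∃ δ > 0, ∃ᶠ k in l, ∃ y ∈ A, δ ≤ visitFrequency (F k) y E

variable {ι : Type*} {l : Filter ι} {F : ι → Finset G} {A : Set X}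

lemma not_hasPosVisitDensity_iff {E : Set X} : ¬ HasPosVisitDensity l F A E ↔
    ∀ δ > 0, ∀ᶠ k in l, ∀ y ∈ A, visitFrequency (F k) y E < δ := by
  simp only [HasPosVisitDensity, not_exists, not_and, not_frequently, not_le]

lemma HasPosVisitDensity.mono {E E' : Set X} (h : HasPosVisitDensity l F A E) (hE : E ⊆ E') :
    HasPosVisitDensity l F A E' := by
  obtain ⟨δ, hδ, hfreq⟩ := h
  exact ⟨δ, hδ, hfreq.mono fun k ⟨y, hy, hk⟩ ↦ ⟨y, hy, hk.trans (visitFrequency_mono _ y hE)⟩⟩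

lemma not_hasPosVisitDensity_empty : ¬ HasPosVisitDensity l F A ∅ :=
  not_hasPosVisitDensity_iff.2 fun δ hδ ↦ .of_forall fun k y _ ↦ by simpa [visitFrequency] using hδ

lemma not_hasPosVisitDensity_union {E E' : Set X} (hE : ¬ HasPosVisitDensity l F A E)
    (hE' : ¬ HasPosVisitDensity l F A E') : ¬ HasPosVisitDensity l F A (E ∪ E') := by
  rw [not_hasPosVisitDensity_iff] at *
  intro δ hδ
  filter_upwards [hE (δ / 2) (half_pos hδ), hE' (δ / 2) (half_pos hδ)] with k hk hk' y hy
  linarith [visitFrequency_union_le (F k) y E E', hk y hy, hk' y hy]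

lemma HasPosVisitDensity.exists_mem_forall_nhds [TopologicalSpace X] {K : Set X}
    (h : HasPosVisitDensity l F A K) (hK : IsCompact K) :
    ∃ p ∈ K, ∀ U ∈ 𝓝 p, HasPosVisitDensity l F A U := by
  by_contra! hcon
  refine hK.induction_on (p := fun E ↦ ¬ HasPosVisitDensity l F A E) not_hasPosVisitDensity_empty
    (fun E E' hEE' hE' hE ↦ hE' (hE.mono hEE')) (fun E E' ↦ not_hasPosVisitDensity_union)
    (fun p hp ↦ ?_) h
  obtain ⟨U, hU, hnot⟩ := hcon p hp
  exact ⟨U, mem_nhdsWithin_of_mem_nhds hU, hnot⟩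

lemma hasPosVisitDensity_of_limsup_pos [l.NeBot] {S : Set G} {x₀ : X} {E : Set X}
    (h : 0 < limsup (fun k ↦ ⨆ s ∈ S, visitFrequency (F k) (s • x₀) E) l) :
    HasPosVisitDensity l F ((· • x₀) '' S) E := by
  obtain ⟨δ, hδ, hlt⟩ := exists_between h
  have hbelow : l.IsBoundedUnder (· ≥ ·) fun k ↦ ⨆ s ∈ S, visitFrequency (F k) (s • x₀) E :=
    isBoundedUnder_of ⟨0, fun k ↦
      Real.iSup_nonneg fun s ↦ Real.iSup_nonneg fun _ ↦ visitFrequency_nonneg _ _ _⟩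
  refine ⟨δ, hδ, (frequently_lt_of_lt_limsup hbelow.isCoboundedUnder_le hlt).mono fun k hk ↦ ?_⟩
  by_contra! hsmall
  refine hk.not_ge (Real.iSup_le (fun s ↦ Real.iSup_le (fun hs ↦ ?_) hδ.le) hδ.le)
  exact (hsmall _ (mem_image_of_mem _ hs)).le

end VisitFrequency

section Folner

-- The elements of `F` failing `q` are images of elements failing `p`, or lie in `F \ f(F)`.
lemma card_filter_le_card_filter_add_card_symmDiff {α : Type*} [DecidableEq α] (F : Finset α)
    (f : α → α) {p q : α → Prop} [DecidablePred p] [DecidablePred q] (h : ∀ a, p a → q (f a)) :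
    #(F.filter p) ≤ #(F.filter q) + #(F.image f ∆ F) := by
  have hsub : {a ∈ F | ¬ q a} ⊆ ({a ∈ F | ¬ p a}).image f ∪ F.image f ∆ F := by
    intro a
    simp only [Finset.mem_filter, Finset.mem_union, Finset.mem_image, Finset.mem_symmDiff]
    grind
  have hcard : #{a ∈ F | ¬ q a} ≤ #{a ∈ F | ¬ p a} + #(F.image f ∆ F) :=
    (Finset.card_le_card hsub).trans <|
      (Finset.card_union_le _ _).trans (Nat.add_le_add_right Finset.card_image_le _)
  have hp := F.card_filter_add_card_filter_not p
  have hq := F.card_filter_add_card_filter_not q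
  omega

variable {G X ι : Type*} [Semigroup G] [DecidableEq G] {S : Subsemigroup G} {l : Filter ι}
  {F : ι → Finset G}

lemma visitFrequency_le_add_card_symmDiff_div [SemigroupAction G X] (F : Finset G) (y : X)
    {s : G} {E E' : Set X} (hE : MapsTo (s • ·) E E') :
    visitFrequency F y E ≤ visitFrequency F y E' + (#(F.image (s * ·) ∆ F) : ℝ) / #F := by
  classical
  have hcard := card_filter_le_card_filter_add_card_symmDiff F (s * ·)
    (p := (· • y ∈ E)) (q := (· • y ∈ E')) fun h hh ↦ by rw [mul_smul]; exact hE hh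
  simp only [visitFrequency, indicator_apply, Finset.sum_boole]
  rw [← add_div]
  gcongr
  exact_mod_cast hcard

/-- `F` is a Følner net, indexed along the filter `l`, in the subsemigroup `S` of `G`. As left
translations need not be injective, `s F_k` is the image of `F k`, possibly smaller than `F k`. -/
structure IsFolnerNet (S : Subsemigroup G) (l : Filter ι) (F : ι → Finset G) : Prop where
  subset : ∀ k, ↑(F k) ⊆ (S : Set G)
  nonempty : ∀ k, (F k).Nonempty
  tendsto : ∀ s ∈ S, Tendsto (fun k ↦ (#((F k).image (s * ·) ∆ F k) : ℝ) / #(F k)) l (𝓝 0)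

namespace IsFolnerNet

-- Both translates `s F_k` and `t F_k` contain more than half of `F_k`, so they meet.
lemma exists_mul_eq_mul [l.NeBot] (hF : IsFolnerNet S l F) {s t : G} (hs : s ∈ S) (ht : t ∈ S) :
    ∃ a ∈ S, ∃ b ∈ S, s * a = t * b := by
  obtain ⟨k, hsk, htk⟩ := (((hF.tendsto s hs).eventually_lt_const one_half_pos).and
    ((hF.tendsto t ht).eventually_lt_const one_half_pos)).exists
  have hpos : (0 : ℝ) < #(F k) := by exact_mod_cast (hF.nonempty k).card_pos
  rw [div_lt_iff₀ hpos] at hsk htk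
  have hcard : #((F k).image (s * ·) ∆ F k ∪ (F k).image (t * ·) ∆ F k) < #(F k) := by
    refine (Finset.card_union_le _ _).trans_lt ?_
    rw [← Nat.cast_lt (α := ℝ), Nat.cast_add]
    linarith
  obtain ⟨g, hg, hgnot⟩ := Finset.exists_mem_notMem_of_card_lt_card hcard
  simp only [Finset.mem_union, Finset.mem_symmDiff, Finset.mem_image] at hgnot
  obtain ⟨⟨a, ha, hag⟩, b, hb, hbg⟩ : (∃ a ∈ F k, s * a = g) ∧ ∃ b ∈ F k, t * b = g := by tauto
  exact ⟨a, hF.subset k ha, b, hF.subset k hb, hag.trans hbg.symm⟩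

lemma mem_closure_of_hasPosVisitDensity [SemigroupAction G X] [TopologicalSpace X]
    (hF : IsFolnerNet S l F) {x₀ p : X}
    (hp : ∀ U ∈ 𝓝 p, HasPosVisitDensity l F ((· • x₀) '' (S : Set G)) U) :
    p ∈ closure ((· • x₀) '' (S : Set G)) := by
  refine mem_closure_iff_nhds.2 fun U hU ↦ ?_
  obtain ⟨δ, hδ, hfreq⟩ := hp U hU
  obtain ⟨k, y, hy, hδy⟩ := hfreq.exists
  obtain ⟨h, hh, hhU⟩ := exists_smul_mem_of_visitFrequency_pos (hδ.trans_le hδy)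
  exact ⟨h • y, hhU, mapsTo_smul_image_smul S x₀ (hF.subset k hh) hy⟩

variable [SemigroupAction G X] [PseudoMetricSpace X]

-- Almost invariance moves the frequency of visits from the ball around `p` to that around `s • p`.
lemma eventually_le_visitFrequency_ball_smul (hF : IsFolnerNet S l F)
    {s : G} (hs : s ∈ S) (hlip : LipschitzWith 1 (s • · : X → X)) (p : X) (r : ℝ) {δ : ℝ}
    (hδ : 0 < δ) : ∀ᶠ k in l, ∀ y : X, visitFrequency (F k) y (Metric.ball p r) ≤
      visitFrequency (F k) y (Metric.ball (s • p) r) + δ := by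
  have hball : MapsTo (s • ·) (Metric.ball p r) (Metric.ball (s • p) r) := fun z hz ↦
    (hlip.dist_le_mul z p).trans_lt (by simpa using hz)
  filter_upwards [(hF.tendsto s hs).eventually_lt_const hδ] with k hk y
  exact (visitFrequency_le_add_card_symmDiff_div (F k) y hball).trans (by gcongr)

lemma totallyBounded_image_smul (hF : IsFolnerNet S l F)
    (hlip : ∀ s ∈ S, LipschitzWith 1 (s • · : X → X)) {A : Set X} {p : X}
    (hp : ∀ U ∈ 𝓝 p, HasPosVisitDensity l F A U) :
    TotallyBounded ((· • p) '' (S : Set G)) := by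
  refine totallyBounded_of_forall_seq_exists_dist_lt fun ε hε u hu ↦ ?_
  choose s hs hsu using hu
  obtain ⟨δ, hδ, hfreq⟩ := hp _ (Metric.ball_mem_nhds p (half_pos hε))
  obtain ⟨n, hn⟩ := exists_nat_gt (2 / δ)
  have htranslate : ∀ᶠ k in l, ∀ i ∈ Finset.range n, ∀ y : X,
      visitFrequency (F k) y (Metric.ball p (ε / 2)) ≤
        visitFrequency (F k) y (Metric.ball (u i) (ε / 2)) + δ / 2 :=
    (Finset.range n).eventually_all.2 fun i _ ↦ hsu i ▸
      hF.eventually_le_visitFrequency_ball_smul (hs i) (hlip _ (hs i)) p _ (half_pos hδ)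
  obtain ⟨k, ⟨y, -, hδy⟩, hk⟩ := (hfreq.and_eventually htranslate).exists
  by_contra! hsep
  have hdisjoint : (Finset.range n : Set ℕ).PairwiseDisjoint fun i ↦ Metric.ball (u i) (ε / 2) :=
    fun i _ j _ hij ↦ Metric.ball_disjoint_ball (by linarith [hsep i j hij])
  have hsum : n * (δ / 2) ≤ 1 := calc
    n * (δ / 2) = ∑ i ∈ Finset.range n, δ / 2 := by simp
    _ ≤ ∑ i ∈ Finset.range n, visitFrequency (F k) y (Metric.ball (u i) (ε / 2)) :=
      Finset.sum_le_sum fun i hi ↦ by linarith [hk i hi y]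
    _ ≤ 1 := sum_visitFrequency_le_one (F k) y _ hdisjoint
  rw [div_lt_iff₀ hδ] at hn
  linarith

end IsFolnerNet

end Folner

theorem fixed_point_of_folner_semigroup_of_lipschitz_maps_general
    {G X ι : Type*} [Semigroup G] [DecidableEq G] [MetricSpace X] [CompleteSpace X]
    [SemigroupAction G X] {σ : X → X → ℝ → X} (hσ : IsConicalBicombing σ) {S : Subsemigroup G}
    (hlip : ∀ s ∈ S, LipschitzWith 1 (s • · : X → X))
    (hequiv : ∀ s ∈ S, SigmaEquivariant σ (s • · : X → X))
    {l : Filter ι} [l.NeBot] {F : ι → Finset G} (hF : IsFolnerNet S l F)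
    {x₀ : X} {K₀ : Set X} (hK₀ : IsCompact K₀)
    (hpos : 0 < limsup (fun k ↦ ⨆ s ∈ (S : Set G), visitFrequency (F k) (s • x₀) K₀) l) :
    ∃ z ∈ closure (convSigma σ ((· • x₀) '' (S : Set G))), ∀ s ∈ S, s • z = z := by
  obtain ⟨p, -, hp⟩ := (hasPosVisitDensity_of_limsup_pos hpos).exists_mem_forall_nhds hK₀
  have hSne : (S : Set G).Nonempty :=
    let ⟨k⟩ := l.nonempty_of_neBot
    (Finset.coe_nonempty.2 (hF.nonempty k)).mono (hF.subset k)
  obtain ⟨z, hz, hfix⟩ := exists_fixed_point_of_totallyBounded_orbit hσ hlip hequiv hSne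
    (fun s hs t ht ↦ hF.exists_mul_eq_mul hs ht) (hF.totallyBounded_image_smul hlip hp)
  refine ⟨z, closure_minimal (convSigma_subset ?_ ?_) isClosed_closure hz, hfix⟩
  · rintro _ ⟨s, hs, rfl⟩
    exact closure_mono (subset_convSigma σ _) <|
      map_mem_closure (hlip s hs).continuous (hF.mem_closure_of_hasPosVisitDensity hp)
        (mapsTo_smul_image_smul S x₀ hs)
  · exact hσ.isSigmaConvex_closure (hσ.isSigmaConvex_convSigma _)

theorem fixed_point_of_folner_semigroup_of_lipschitz_maps
    {X : Type*} [MetricSpace X] [CompleteSpace X] [DecidableEq (X → X)]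
    (σ : X → X → ℝ → X) (hσ : IsConicalBicombing σ) (hmid : MidpointProp σ)
    (S : Set (X → X)) (hcount : S.Countable)
    (hlip : ∀ s ∈ S, LipschitzWith 1 s)
    (hcomp : ∀ s ∈ S, ∀ t ∈ S, s ∘ t ∈ S)
    (hequiv : ∀ s ∈ S, SigmaEquivariant σ s)
    (F : ℕ → Finset (X → X)) (hFS : ∀ k, ↑(F k) ⊆ S) (hFne : ∀ k, (F k).Nonempty)
    (hFolner : ∀ s ∈ S, Filter.Tendsto
      (fun k => ((symmDiff ((F k).image (fun h => s ∘ h)) (F k)).card : ℝ) / (F k).card)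
      Filter.atTop (nhds 0))
    (x₀ : X) (K₀ : Set X) (hK₀ : IsCompact K₀)
    (hbdd : Bornology.IsBounded ((fun s : X → X => s x₀) '' S))
    (hpos : 0 < Filter.atTop.limsup (fun k : ℕ =>
      ⨆ s ∈ S, (∑ h ∈ F k, K₀.indicator (fun _ => (1:ℝ)) (h (s x₀))) / (F k).card)) :
    ∃ xs ∈ closure (convSigma σ ((fun s : X → X => s x₀) '' S)),
      ∀ s ∈ S, s xs = xs := by
  let _ : DecidableEq (Function.End X) := ‹DecidableEq (X → X)›
  exact fixed_point_of_folner_semigroup_of_lipschitz_maps_general (G := Function.End X) hσ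
    (S := ⟨S, fun hs ht ↦ hcomp _ hs _ ht⟩) hlip hequiv ⟨hFS, hFne, hFolner⟩ hK₀ hpos
end

section
/- Let (X,d) be a metric space and let φ : X → X be an isometry. If there is a point x₀ ∈ X and a bounded subset B ⊆ X such that limsup_{k→∞} ( sup_{l≥0} (1/k) Σ_{i=0}^{k−1} 1_B(φ^{i+l}(x₀)) ) > 0, where 1_B is the indicator function of B, then the orbit {φ^k(x₀) : k ≥ 0} is a bounded subset of X. -/
/-!
Let `A` be the set of times at which the orbit visits `B`. Pairwise disjoint translates of a set of
upper Banach density `d > 0` number at most `1 / d`. Taking a maximal family `{a + A : a ∈ F}` of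
such translates, every `n + A` meets some `a + A` with `a ∈ F`. If `n + s = a + t` with
`s, t ∈ A`, then `dist (φ^n x) (φ^a x) = dist (φ^t x) (φ^s x) ≤ diam B` since `φ` is an isometry.
Hence the orbit lies in finitely many balls of radius `diam B`.
-/

open Filter Finset Topology
open scoped Pointwise

/-- The upper Banach density of a set of natural numbers: the upper limit, as the window length `k`
grows, of the largest proportion of a window `[l, l + k)` that the set occupies. The windows are
written as shifts `i + l` of `i < k`; all proportions lie in `[0, 1]`, so the real-valued supremum
and upper limit are not junk values. -/
noncomputable def upperBanachDensity (A : Set ℕ) : ℝ :=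
  atTop.limsup fun k : ℕ => ⨆ l : ℕ, (∑ i ∈ range k, A.indicator (fun _ => (1 : ℝ)) (i + l)) / k

section UpperBanachDensity

variable {A : Set ℕ}

theorem nonempty_of_upperBanachDensity_pos (hA : 0 < upperBanachDensity A) : A.Nonempty := by
  rw [Set.nonempty_iff_ne_empty]
  rintro rfl
  simp [upperBanachDensity] at hA

theorem card_mul_sum_indicator_le_of_pairwiseDisjoint_vadd {F : Finset ℕ}
    (hF : (F : Set ℕ).PairwiseDisjoint (· +ᵥ A)) (k l : ℕ) :
    #F * ∑ i ∈ range k, A.indicator (fun _ => (1 : ℝ)) (i + l) ≤ k + F.sup id := by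
  classical
  let T : Finset ℕ := {i ∈ range k | i + l ∈ A}
  have sum_eq : ∑ i ∈ range k, A.indicator (fun _ => (1 : ℝ)) (i + l) = #T := by
    simp [Set.indicator_apply, T]
  have add_injOn : (F ×ˢ T : Set (ℕ × ℕ)).InjOn fun p => p.1 + p.2 := by
    rintro ⟨a, i⟩ ⟨ha, hi⟩ ⟨b, j⟩ ⟨hb, hj⟩ (hab : a + i = b + j)
    have mem_i : (a, i + l) ∈ (F ×ˢ A : Set (ℕ × ℕ)) := ⟨ha, (mem_filter.1 hi).2⟩
    have mem_j : (b, j + l) ∈ (F ×ˢ A : Set (ℕ × ℕ)) := ⟨hb, (mem_filter.1 hj).2⟩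
    have shifted : (a, i + l) = (b, j + l) :=
      Set.pairwiseDisjoint_vadd_iff.1 hF mem_i mem_j (show a + (i + l) = b + (j + l) by omega)
    simpa using shifted
  have add_subset : F + T ⊆ range (k + F.sup id) := by
    refine add_subset_iff.2 fun a ha i hi => mem_range.2 ?_
    have ha_le : a ≤ F.sup id := le_sup (f := id) ha
    have hi_lt : i < k := mem_range.1 (mem_filter.1 hi).1
    omega
  have card_le : #F * #T ≤ k + F.sup id := by
    simpa [card_add_iff.2 add_injOn] using card_le_card add_subset
  rw [sum_eq]
  exact_mod_cast card_le

theorem card_mul_upperBanachDensity_le_one {F : Finset ℕ}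
    (hF : (F : Set ℕ).PairwiseDisjoint (· +ᵥ A)) : #F * upperBanachDensity A ≤ 1 := by
  obtain rfl | hne := F.eq_empty_or_nonempty
  · simp
  have card_pos : (0 : ℝ) < #F := by exact_mod_cast hne.card_pos
  have tendsto_bound :
      Tendsto (fun k : ℕ => (1 + (F.sup id : ℕ) / (k : ℝ)) / #F) atTop (𝓝 (1 / #F)) := by
    simpa using ((tendsto_const_div_atTop_nhds_zero_nat _).const_add 1).div_const (#F : ℝ)
  have window_le : ∀ᶠ k : ℕ in atTop,
      ⨆ l : ℕ, (∑ i ∈ range k, A.indicator (fun _ => (1 : ℝ)) (i + l)) / k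
        ≤ (1 + (F.sup id : ℕ) / (k : ℝ)) / #F := by
    filter_upwards [eventually_gt_atTop 0] with k hk
    have k_pos : (0 : ℝ) < k := by exact_mod_cast hk
    refine ciSup_le fun l => ?_
    rw [le_div_iff₀' card_pos, ← mul_div_assoc, div_le_iff₀ k_pos, add_mul, one_mul,
      div_mul_cancel₀ _ k_pos.ne']
    exact card_mul_sum_indicator_le_of_pairwiseDisjoint_vadd hF k l
  have window_nonneg (k : ℕ) :
      0 ≤ ⨆ l : ℕ, (∑ i ∈ range k, A.indicator (fun _ => (1 : ℝ)) (i + l)) / k :=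
    Real.iSup_nonneg fun l => div_nonneg
      (sum_nonneg fun i _ => Set.indicator_nonneg (fun _ _ => zero_le_one) _) k.cast_nonneg
  rw [← le_div_iff₀' card_pos, ← tendsto_bound.limsup_eq]
  exact limsup_le_limsup window_le
    (isBoundedUnder_of ⟨0, window_nonneg⟩).isCoboundedUnder_le tendsto_bound.isBoundedUnder_le

theorem exists_finset_forall_exists_not_disjoint_vadd (hA : 0 < upperBanachDensity A) :
    ∃ F : Finset ℕ, ∀ n : ℕ, ∃ a ∈ F, ¬ Disjoint (n +ᵥ A) (a +ᵥ A) := by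
  classical
  let packings : Set (Finset ℕ) := {F | (F : Set ℕ).PairwiseDisjoint (· +ᵥ A)}
  have finite_card : (card '' packings).Finite := by
    refine (Set.finite_Iic ⌊1 / upperBanachDensity A⌋₊).subset ?_
    rintro _ ⟨F, hF, rfl⟩
    exact Nat.le_floor ((le_div_iff₀ hA).2 (card_mul_upperBanachDensity_le_one hF))
  obtain ⟨F, hF, hmax⟩ :=
    Set.Finite.exists_maximalFor' card packings finite_card ⟨∅, by simp [packings]⟩
  refine ⟨F, fun n => ?_⟩
  by_contra! hdisj
  have hn : n ∉ F := fun hnF =>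
    (nonempty_of_upperBanachDensity_pos hA).vadd_set.ne_empty (disjoint_self.1 (hdisj n hnF))
  have insert_mem : insert n F ∈ packings := by
    simpa [packings] using hF.insert fun a ha _ => hdisj a ha
  have card_insert_le : #(insert n F) ≤ #F := hmax insert_mem (card_le_card (subset_insert n F))
  rw [card_insert_of_notMem hn] at card_insert_le
  omega

end UpperBanachDensity

section Orbit

variable {X : Type*} [PseudoMetricSpace X] {φ : X → X} {x : X} {B : Set X}

theorem dist_iterate_add_left (hφ : Isometry φ) (k m n : ℕ) :
    dist (φ^[k + m] x) (φ^[k + n] x) = dist (φ^[m] x) (φ^[n] x) := by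
  induction k with
  | zero => simp only [zero_add]
  | succ k ih =>
    rw [Nat.succ_add, Nat.succ_add, Function.iterate_succ_apply', Function.iterate_succ_apply',
      hφ.dist_eq, ih]

theorem dist_iterate_le_diam_of_not_disjoint_vadd (hφ : Isometry φ) (hB : Bornology.IsBounded B)
    {m n : ℕ}
    (h : ¬ Disjoint (m +ᵥ (fun k => φ^[k] x) ⁻¹' B) (n +ᵥ (fun k => φ^[k] x) ⁻¹' B)) :
    dist (φ^[m] x) (φ^[n] x) ≤ Metric.diam B := by
  obtain ⟨_, ⟨s, hs, rfl⟩, t, ht, hst : n + t = m + s⟩ := Set.not_disjoint_iff.1 h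
  calc dist (φ^[m] x) (φ^[n] x)
      = dist (φ^[s + m] x) (φ^[s + n] x) := (dist_iterate_add_left hφ s m n).symm
    _ = dist (φ^[n + t] x) (φ^[n + s] x) := by rw [add_comm s m, ← hst, add_comm s n]
    _ = dist (φ^[t] x) (φ^[s] x) := dist_iterate_add_left hφ n t s
    _ ≤ Metric.diam B := Metric.dist_le_diam_of_mem hB ht hs

theorem orbit_bounded_of_positive_upper_banach_density_general (hφ : Isometry φ)
    (hB : Bornology.IsBounded B) (hrec : 0 < upperBanachDensity ((fun k => φ^[k] x) ⁻¹' B)) :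
    Bornology.IsBounded (Set.range fun k : ℕ => φ^[k] x) := by
  obtain ⟨F, hF⟩ := exists_finset_forall_exists_not_disjoint_vadd hrec
  have isBounded_balls :
      Bornology.IsBounded (⋃ a ∈ F, Metric.closedBall (φ^[a] x) (Metric.diam B)) :=
    (Bornology.isBounded_biUnion_finset F).2 fun _ _ => Metric.isBounded_closedBall
  refine isBounded_balls.subset ?_
  rintro _ ⟨n, rfl⟩
  obtain ⟨a, ha, hna⟩ := hF n
  exact Set.mem_biUnion ha (dist_iterate_le_diam_of_not_disjoint_vadd hφ hB hna)

end Orbit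

theorem orbit_bounded_of_positive_upper_banach_density
    {X : Type*} [MetricSpace X]
    (φ : X → X) (hiso : Isometry φ) (hsurj : Function.Surjective φ)
    (x₀ : X) (B : Set X) (hB : Bornology.IsBounded B)
    (hrec : 0 < Filter.atTop.limsup (fun k : ℕ =>
      ⨆ l : ℕ, (∑ i ∈ Finset.range k,
        B.indicator (fun _ => (1:ℝ)) (φ^[i + l] x₀)) / k)) :
    Bornology.IsBounded (Set.range fun k : ℕ => φ^[k] x₀) :=
  orbit_bounded_of_positive_upper_banach_density_general hiso hB hrec
end
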